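/- arXiv:2404.01610 — 2 statements merged into one kernel-verified Lean document; each statement's English description precedes it below -/
import Mathlib

section
/- Let h : V → ℝ be a positive function. Then there exist constants C₁ > 0 and C₂ < 0, depending only on (V, μ, W) and h, such that every u : V → ℝ with ∫_V u dμ = 0 satisfies ∫_V h e^u dμ ≥ C₁ e^{C₂ ‖∇u‖₂}, where ‖∇u‖₂ = (∫_V |∇u|² dμ)^{1/2}. -/
/-!
By Jensen's inequality for `exp` with weights `μ`, applied to `log h + u`, the integral
`∫_V h e^u dμ` is at least `|V|` times the exponential of the mean of `log h + u`. When `u` has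
mean zero, this bound does not depend on `u`, while `e^{C₂ ‖∇u‖₂} ≤ 1` for every `C₂ < 0`.
-/

open Real Finset

variable {V : Type*}

/-- Discrete integral: `∫_V f dμ = Σ_x μ(x) f(x)`. -/
noncomputable def intV [Fintype V] (μ f : V → ℝ) : ℝ := ∑ x, μ x * f x

/-- Volume `|V| = Σ_x μ(x)`. -/
noncomputable def volV [Fintype V] (μ : V → ℝ) : ℝ := ∑ x, μ x

/-- The nonlocal (fractional graph Laplacian type) operator
`Lu(x) = (1/μ(x)) Σ_{y ≠ x} W(x,y)(u(x) − u(y))`. -/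
noncomputable def opL [Fintype V] [DecidableEq V] (μ : V → ℝ) (W : V → V → ℝ)
    (u : V → ℝ) (x : V) : ℝ :=
  (1 / μ x) * ∑ y ∈ univ.filter (fun y => y ≠ x), W x y * (u x - u y)

/-- Gradient form `∇u·∇v(x) = (1/(2μ(x))) Σ_{y ≠ x} W(x,y)(u(x)−u(y))(v(x)−v(y))`. -/
noncomputable def gradForm [Fintype V] [DecidableEq V] (μ : V → ℝ) (W : V → V → ℝ)
    (u v : V → ℝ) (x : V) : ℝ :=
  (1 / (2 * μ x)) * ∑ y ∈ univ.filter (fun y => y ≠ x), W x y * (u x - u y) * (v x - v y)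

/-- `|∇u|²(x) = ∇u·∇u(x)`. -/
noncomputable def gradSq [Fintype V] [DecidableEq V] (μ : V → ℝ) (W : V → V → ℝ)
    (u : V → ℝ) (x : V) : ℝ := gradForm μ W u u x

theorem volV_pos [Fintype V] [Nonempty V] {μ : V → ℝ} (hμ : ∀ x, 0 < μ x) : 0 < volV μ :=
  sum_pos (fun x _ => hμ x) univ_nonempty

theorem intV_add [Fintype V] (μ f g : V → ℝ) :
    intV μ (fun x => f x + g x) = intV μ f + intV μ g := by
  simp only [intV, mul_add, sum_add_distrib]

theorem volV_mul_exp_average_le_intV_exp [Fintype V] {μ : V → ℝ} (hμ : ∀ x, 0 ≤ μ x)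
    (hvol : 0 < volV μ) (f : V → ℝ) :
    volV μ * Real.exp (intV μ f / volV μ) ≤ intV μ (fun x => Real.exp (f x)) := by
  have jensen : Real.exp (univ.centerMass μ f) ≤ univ.centerMass μ (fun x => Real.exp (f x)) :=
    convexOn_exp.map_centerMass_le (fun x _ => hμ x) hvol (fun x _ => Set.mem_univ (f x))
  have centerMass_eq (g : V → ℝ) : univ.centerMass μ g = intV μ g / volV μ := by
    simp only [centerMass, smul_eq_mul, intV, volV, div_eq_inv_mul]
  rwa [centerMass_eq, centerMass_eq, le_div_iff₀' hvol] at jensen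

theorem volV_mul_exp_average_log_add_le_intV_mul_exp [Fintype V] {μ : V → ℝ}
    (hμ : ∀ x, 0 ≤ μ x) (hvol : 0 < volV μ) {h : V → ℝ} (hh : ∀ x, 0 < h x) (u : V → ℝ) :
    volV μ * Real.exp ((intV μ (fun x => Real.log (h x)) + intV μ u) / volV μ) ≤
      intV μ (fun x => h x * Real.exp (u x)) := by
  have h_mul_exp (x : V) : h x * Real.exp (u x) = Real.exp (Real.log (h x) + u x) := by
    rw [Real.exp_add, Real.exp_log (hh x)]
  simpa only [h_mul_exp, intV_add] using
    volV_mul_exp_average_le_intV_exp hμ hvol (fun x => Real.log (h x) + u x)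

theorem lower_bound_h_exp_general [Fintype V] {μ : V → ℝ} (hμ : ∀ x, 0 ≤ μ x)
    (hvol : 0 < volV μ) {h : V → ℝ} (hh : ∀ x, 0 < h x) :
    ∃ C : ℝ, 0 < C ∧ ∀ u : V → ℝ, 0 ≤ intV μ u → C ≤ intV μ (fun x => h x * Real.exp (u x)) := by
  refine ⟨volV μ * Real.exp (intV μ (fun x => Real.log (h x)) / volV μ),
    mul_pos hvol (Real.exp_pos _), fun u hu => ?_⟩
  refine le_trans ?_ (volV_mul_exp_average_log_add_le_intV_mul_exp hμ hvol hh u)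
  gcongr
  exact le_add_of_nonneg_right hu

/-- For positive `h` there exist `C₁ > 0`, `C₂ < 0` such that every mean-zero `u` satisfies
`∫_V h e^u dμ ≥ C₁ e^{C₂ ‖∇u‖₂}`. -/
theorem lower_bound_h_exp [Fintype V] [Nonempty V] [DecidableEq V]
    (μ : V → ℝ) (W : V → V → ℝ)
    (hμ : ∀ x, 0 < μ x)
    (hWsym : ∀ x y, W x y = W y x)
    (hWpos : ∀ x y, x ≠ y → 0 < W x y)
    (h : V → ℝ) (hh : ∀ x, 0 < h x) :
    ∃ C₁ C₂ : ℝ, 0 < C₁ ∧ C₂ < 0 ∧ ∀ u : V → ℝ, intV μ u = 0 →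
      C₁ * Real.exp (C₂ * Real.sqrt (intV μ (gradSq μ W u))) ≤
        intV μ (fun x => h x * Real.exp (u x)) := by
  obtain ⟨C, hC, hle⟩ := lower_bound_h_exp_general (fun x => (hμ x).le) (volV_pos hμ) hh
  exact ⟨C, -1, hC, neg_one_lt_zero, fun u hu =>
    (mul_le_of_le_one_right hC.le (Real.exp_le_one_iff.2 (by simp))).trans (hle u hu.ge)⟩
end

section
/- Let h : V → ℝ be positive and ρ ∈ ℝ with ρ ≠ 0. Then there exists a constant C, depending only on (V, μ, W), h and ρ, such that every u : V → ℝ with ∫_V u dμ = 0 satisfies J_ρ(u) ≥ (1/4)∫_V |∇u|² dμ − C. In particular J_ρ is bounded from below on {u : ∫_V u dμ = 0}. -/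
open Real Finset

variable {V : Type*}

/-- The mean field functional `J_ρ(u) = (1/2) ∫_V |∇u|² dμ − ρ log ∫_V h e^u dμ`. -/
noncomputable def Jrho [Fintype V] [DecidableEq V] (μ : V → ℝ) (W : V → V → ℝ)
    (h : V → ℝ) (ρ : ℝ) (u : V → ℝ) : ℝ :=
  (1 / 2) * intV μ (gradSq μ W u) - ρ * Real.log (intV μ (fun x => h x * Real.exp (u x)))

/-!
On a finite connected weighted graph the oscillation of `u` is at most a constant times the square
root of its energy `E = ∫_V |∇u|² dμ`: each edge of positive weight bounds the difference of its
endpoint values, and differences add up along walks. A mean-zero `u` takes values of both signs,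
hence `|u| ≤ c √E` pointwise. Since `log ∫_V h e^u dμ` is `1`-Lipschitz in `u` for the sup norm, the
nonlinear term grows at most like `√E`, and Young's inequality absorbs it into the quadratic term.
-/

section Integral

variable [Fintype V] {μ h u v : V → ℝ} {S : ℝ}

lemma intV_pos (hμ : ∀ x, 0 < μ x) (hh : ∀ x, 0 ≤ h x) (hpos : ∃ x, 0 < h x) :
    0 < intV μ h := by
  obtain ⟨x, hx⟩ := hpos
  exact sum_pos' (fun y _ ↦ mul_nonneg (hμ y).le (hh y)) ⟨x, mem_univ x, mul_pos (hμ x) hx⟩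

lemma intV_neg (μ u : V → ℝ) : intV μ (-u) = -intV μ u := by
  simp only [intV, Pi.neg_apply, mul_neg, sum_neg_distrib]

lemma exists_nonpos_of_intV_nonpos [Nonempty V] (hμ : ∀ x, 0 < μ x) (hu : intV μ u ≤ 0) :
    ∃ x, u x ≤ 0 := by
  by_contra! hpos
  exact hu.not_gt (intV_pos hμ (fun x ↦ (hpos x).le) ⟨Classical.arbitrary V, hpos _⟩)

lemma abs_le_of_intV_eq_zero (hμ : ∀ x, 0 < μ x) (hu : intV μ u = 0)
    (hosc : ∀ x y, |u x - u y| ≤ S) (x : V) : |u x| ≤ S := by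
  have : Nonempty V := ⟨x⟩
  obtain ⟨y, hy⟩ := exists_nonpos_of_intV_nonpos hμ hu.le
  obtain ⟨z, hz⟩ := exists_nonpos_of_intV_nonpos hμ (u := -u) (by rw [intV_neg, hu, neg_zero])
  rw [Pi.neg_apply] at hz
  have hxy := (abs_le.mp (hosc x y)).2
  have hxz := (abs_le.mp (hosc x z)).1
  exact abs_le.mpr ⟨by linarith, by linarith⟩

lemma intV_mul_exp_pos (hμ : ∀ x, 0 < μ x) (hh : ∀ x, 0 ≤ h x) (hpos : ∃ x, 0 < h x)
    (u : V → ℝ) : 0 < intV μ (fun x ↦ h x * exp (u x)) :=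
  intV_pos hμ (fun x ↦ mul_nonneg (hh x) (exp_pos _).le)
    (hpos.imp fun _ hx ↦ mul_pos hx (exp_pos _))

lemma intV_mul_exp_le (hμ : ∀ x, 0 ≤ μ x) (hh : ∀ x, 0 ≤ h x) (huv : ∀ x, u x ≤ v x + S) :
    intV μ (fun x ↦ h x * exp (u x)) ≤ intV μ (fun x ↦ h x * exp (v x)) * exp S := by
  unfold intV
  rw [sum_mul]
  refine sum_le_sum fun x _ ↦ ?_
  calc μ x * (h x * exp (u x)) ≤ μ x * (h x * exp (v x + S)) :=
        mul_le_mul_of_nonneg_left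
          (mul_le_mul_of_nonneg_left (exp_le_exp.mpr (huv x)) (hh x)) (hμ x)
    _ = μ x * (h x * exp (v x)) * exp S := by rw [exp_add]; ring

lemma log_intV_mul_exp_le (hμ : ∀ x, 0 < μ x) (hh : ∀ x, 0 ≤ h x) (hpos : ∃ x, 0 < h x)
    (huv : ∀ x, u x ≤ v x + S) :
    log (intV μ (fun x ↦ h x * exp (u x))) ≤ log (intV μ (fun x ↦ h x * exp (v x))) + S := by
  have hu := intV_mul_exp_pos hμ hh hpos u
  have hv := intV_mul_exp_pos hμ hh hpos v
  calc log (intV μ (fun x ↦ h x * exp (u x)))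
      ≤ log (intV μ (fun x ↦ h x * exp (v x)) * exp S) :=
        log_le_log hu (intV_mul_exp_le (fun x ↦ (hμ x).le) hh huv)
    _ = log (intV μ (fun x ↦ h x * exp (v x))) + S := by
        rw [log_mul hv.ne' (exp_ne_zero S), log_exp]

lemma abs_log_intV_mul_exp_sub_le (hμ : ∀ x, 0 < μ x) (hh : ∀ x, 0 ≤ h x)
    (hpos : ∃ x, 0 < h x) (huv : ∀ x, |u x - v x| ≤ S) :
    |log (intV μ (fun x ↦ h x * exp (u x))) - log (intV μ (fun x ↦ h x * exp (v x)))| ≤ S := by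
  refine abs_sub_le_iff.mpr ⟨sub_le_iff_le_add'.mpr ?_, sub_le_iff_le_add'.mpr ?_⟩
  · exact log_intV_mul_exp_le hμ hh hpos fun x ↦ by linarith [(abs_le.mp (huv x)).2]
  · exact log_intV_mul_exp_le hμ hh hpos fun x ↦ by linarith [(abs_le.mp (huv x)).1]

end Integral

/-- The graph of a weight `W`, whose walks carry energy bounds from one vertex to another: distinct
`x` and `y` are adjacent when `W x y` or `W y x` is positive, so that for an asymmetric `W`
connectedness means weak connectedness. -/
def weightGraph (W : V → V → ℝ) : SimpleGraph V := SimpleGraph.fromRel fun x y ↦ 0 < W x y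

lemma weightGraph_preconnected_of_pos {W : V → V → ℝ} (hW : ∀ x y, x ≠ y → 0 < W x y) :
    (weightGraph W).Preconnected :=
  SimpleGraph.preconnected_top.mono fun x y hxy ↦
    (SimpleGraph.fromRel_adj _ _ _).mpr ⟨hxy, .inl (hW x y hxy)⟩

lemma weight_mul_sq_sub_nonneg {W : V → V → ℝ} (hW : ∀ x y, x ≠ y → 0 ≤ W x y)
    (u : V → ℝ) (x y : V) : 0 ≤ W x y * (u x - u y) ^ 2 := by
  rcases eq_or_ne x y with rfl | hxy
  · simp
  · exact mul_nonneg (hW x y hxy) (sq_nonneg _)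

section Energy

variable [Fintype V] [DecidableEq V] {μ : V → ℝ} {W : V → V → ℝ}

lemma intV_gradSq (hμ : ∀ x, μ x ≠ 0) (W : V → V → ℝ) (u : V → ℝ) :
    intV μ (gradSq μ W u) = (1 / 2) * ∑ x, ∑ y, W x y * (u x - u y) ^ 2 := by
  have hdiag : ∀ x, ∑ y with y ≠ x, W x y * (u x - u y) ^ 2 = ∑ y, W x y * (u x - u y) ^ 2 := by
    refine fun x ↦ sum_filter_of_ne fun y _ hne hyx ↦ hne ?_
    rw [hyx, sub_self, zero_pow two_ne_zero, mul_zero]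
  simp only [← hdiag, intV, gradSq, gradForm, mul_sum]
  refine sum_congr rfl fun x _ ↦ sum_congr rfl fun y _ ↦ ?_
  have := hμ x
  field_simp

lemma intV_gradSq_nonneg (hμ : ∀ x, μ x ≠ 0) (hW : ∀ x y, x ≠ y → 0 ≤ W x y) (u : V → ℝ) :
    0 ≤ intV μ (gradSq μ W u) := by
  rw [intV_gradSq hμ]
  exact mul_nonneg (by norm_num)
    (sum_nonneg fun x _ ↦ sum_nonneg fun y _ ↦ weight_mul_sq_sub_nonneg hW u x y)

lemma weight_mul_sq_sub_le_intV_gradSq (hμ : ∀ x, μ x ≠ 0) (hW : ∀ x y, x ≠ y → 0 ≤ W x y)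
    (u : V → ℝ) (x y : V) :
    W x y * (u x - u y) ^ 2 ≤ 2 * intV μ (gradSq μ W u) := by
  have hterm := weight_mul_sq_sub_nonneg hW u
  calc W x y * (u x - u y) ^ 2
      ≤ ∑ b, W x b * (u x - u b) ^ 2 :=
        single_le_sum (f := fun b ↦ W x b * (u x - u b) ^ 2) (fun b _ ↦ hterm x b) (mem_univ y)
    _ ≤ ∑ a, ∑ b, W a b * (u a - u b) ^ 2 :=
        single_le_sum (f := fun a ↦ ∑ b, W a b * (u a - u b) ^ 2)
          (fun a _ ↦ sum_nonneg fun b _ ↦ hterm a b) (mem_univ x)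
    _ = 2 * intV μ (gradSq μ W u) := by rw [intV_gradSq hμ]; ring

lemma abs_sub_le_sqrt_intV_gradSq_of_pos (hμ : ∀ x, μ x ≠ 0) (hW : ∀ x y, x ≠ y → 0 ≤ W x y)
    (u : V → ℝ) {x y : V} (hpos : 0 < W x y) :
    |u x - u y| ≤ √(2 / W x y) * √(intV μ (gradSq μ W u)) := by
  rw [← sqrt_mul (by positivity)]
  refine abs_le_sqrt ?_
  rw [div_mul_eq_mul_div, le_div_iff₀' hpos]
  exact weight_mul_sq_sub_le_intV_gradSq hμ hW u x y

lemma exists_abs_sub_le_sqrt_intV_gradSq_of_adj (hμ : ∀ x, μ x ≠ 0)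
    (hW : ∀ x y, x ≠ y → 0 ≤ W x y) {x y : V} (hxy : (weightGraph W).Adj x y) :
    ∃ c : ℝ, ∀ u : V → ℝ, |u x - u y| ≤ c * √(intV μ (gradSq μ W u)) := by
  obtain ⟨-, hpos | hpos⟩ := (SimpleGraph.fromRel_adj _ _ _).mp hxy
  · exact ⟨_, fun u ↦ abs_sub_le_sqrt_intV_gradSq_of_pos hμ hW u hpos⟩
  · refine ⟨√(2 / W y x), fun u ↦ ?_⟩
    rw [abs_sub_comm]
    exact abs_sub_le_sqrt_intV_gradSq_of_pos hμ hW u hpos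

lemma exists_abs_sub_le_sqrt_intV_gradSq_of_reachable (hμ : ∀ x, μ x ≠ 0)
    (hW : ∀ x y, x ≠ y → 0 ≤ W x y) {x y : V} (hxy : (weightGraph W).Reachable x y) :
    ∃ c : ℝ, ∀ u : V → ℝ, |u x - u y| ≤ c * √(intV μ (gradSq μ W u)) := by
  obtain ⟨p⟩ := hxy
  induction p with
  | nil => exact ⟨0, fun u ↦ by simp⟩
  | @cons x z y hxz _ ih =>
    obtain ⟨c, hc⟩ := exists_abs_sub_le_sqrt_intV_gradSq_of_adj hμ hW hxz
    obtain ⟨d, hd⟩ := ih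
    refine ⟨c + d, fun u ↦ ?_⟩
    calc |u x - u y| ≤ |u x - u z| + |u z - u y| := abs_sub_le _ _ _
      _ ≤ (c + d) * √(intV μ (gradSq μ W u)) := by rw [add_mul]; exact add_le_add (hc u) (hd u)

lemma exists_forall_abs_sub_le_sqrt_intV_gradSq (hμ : ∀ x, μ x ≠ 0)
    (hW : ∀ x y, x ≠ y → 0 ≤ W x y) (hconn : (weightGraph W).Preconnected) :
    ∃ c : ℝ, ∀ (u : V → ℝ) (x y : V), |u x - u y| ≤ c * √(intV μ (gradSq μ W u)) := by
  choose c hc using fun p : V × V ↦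
    exists_abs_sub_le_sqrt_intV_gradSq_of_reachable hμ hW (hconn p.1 p.2)
  obtain ⟨M, hM⟩ := Finite.exists_le c
  exact ⟨M, fun u x y ↦
    (hc (x, y) u).trans (mul_le_mul_of_nonneg_right (hM (x, y)) (sqrt_nonneg _))⟩

end Energy

lemma mul_sqrt_le_mul_add_sq_div (a : ℝ) {δ E : ℝ} (hδ : 0 < δ) (hE : 0 ≤ E) :
    a * √E ≤ δ * E + a ^ 2 / (4 * δ) := by
  have hsq : δ * E + a ^ 2 / (4 * δ) - a * √E = (2 * δ * √E - a) ^ 2 / (4 * δ) := by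
    nth_rw 1 [← sq_sqrt hE]
    field_simp
    ring
  rw [← sub_nonneg, hsq]
  positivity

theorem Jrho_lower_bound_general [Fintype V] [DecidableEq V] {μ : V → ℝ} {W : V → V → ℝ}
    (hμ : ∀ x, 0 < μ x) (hW : ∀ x y, x ≠ y → 0 ≤ W x y) (hconn : (weightGraph W).Preconnected)
    {h : V → ℝ} (hh : ∀ x, 0 ≤ h x) (hpos : ∃ x, 0 < h x) (ρ : ℝ) {θ : ℝ} (hθ : θ < 1 / 2) :
    ∃ C : ℝ, ∀ u : V → ℝ, intV μ u = 0 → θ * intV μ (gradSq μ W u) - C ≤ Jrho μ W h ρ u := by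
  have hμ' : ∀ x, μ x ≠ 0 := fun x ↦ (hμ x).ne'
  obtain ⟨c, hosc⟩ := exists_forall_abs_sub_le_sqrt_intV_gradSq hμ' hW hconn
  refine ⟨ρ * log (intV μ h) + (|ρ| * c) ^ 2 / (4 * (1 / 2 - θ)), fun u hu ↦ ?_⟩
  unfold Jrho
  set E := intV μ (gradSq μ W u)
  set L := log (intV μ fun x ↦ h x * exp (u x))
  have hsup : ∀ x, |u x| ≤ c * √E := abs_le_of_intV_eq_zero hμ hu (hosc u)
  have hlog : |L - log (intV μ h)| ≤ c * √E := by
    simpa using abs_log_intV_mul_exp_sub_le hμ hh hpos (v := 0) (by simpa using hsup)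
  have hYoung : |ρ| * c * √E ≤ (1 / 2 - θ) * E + (|ρ| * c) ^ 2 / (4 * (1 / 2 - θ)) :=
    mul_sqrt_le_mul_add_sq_div _ (sub_pos.mpr hθ) (intV_gradSq_nonneg hμ' hW u)
  have hρL : ρ * (L - log (intV μ h)) ≤ |ρ| * c * √E :=
    calc ρ * (L - log (intV μ h)) ≤ |ρ| * |L - log (intV μ h)| := by
          rw [← abs_mul]; exact le_abs_self _
      _ ≤ |ρ| * c * √E := by
          rw [mul_assoc]; exact mul_le_mul_of_nonneg_left hlog (abs_nonneg ρ)
  linarith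

/-- For positive `h` and `ρ ≠ 0` there is `C` with `J_ρ(u) ≥ (1/4) ∫_V |∇u|² dμ − C` for every
mean-zero `u`; in particular `J_ρ` is bounded below on the mean-zero subspace. -/
theorem Jrho_lower_bound [Fintype V] [Nonempty V] [DecidableEq V]
    (μ : V → ℝ) (W : V → V → ℝ)
    (hμ : ∀ x, 0 < μ x)
    (hWsym : ∀ x y, W x y = W y x)
    (hWpos : ∀ x y, x ≠ y → 0 < W x y)
    (h : V → ℝ) (hh : ∀ x, 0 < h x)
    (ρ : ℝ) (hρ : ρ ≠ 0) :
    (∃ C : ℝ, ∀ u : V → ℝ, intV μ u = 0 →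
      (1 / 4) * intV μ (gradSq μ W u) - C ≤ Jrho μ W h ρ u) ∧
    (∃ m : ℝ, ∀ u : V → ℝ, intV μ u = 0 → m ≤ Jrho μ W h ρ u) := by
  have hbound {θ : ℝ} (hθ : θ < 1 / 2) :=
    Jrho_lower_bound_general hμ (fun x y hxy ↦ (hWpos x y hxy).le)
      (weightGraph_preconnected_of_pos hWpos) (fun x ↦ (hh x).le) ⟨Classical.arbitrary V, hh _⟩ ρ hθ
  obtain ⟨C, hC⟩ := hbound (θ := 0) (by norm_num)
  exact ⟨hbound (by norm_num), -C, fun u hu ↦ by simpa using hC u hu⟩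
end
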